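/- Let T be a ℤ₊^k-action on a compact metric space X with generators {T_i : 1 ≤ i ≤ k}. Suppose the ball dimension D(X) of X is finite and each T_i is Lipschitz with Lipschitz constant L(T_i). Then h(T) ≤ log Σ_{i=1}^{k} L₊(T_i)^{D(X)}, where L₊(T_i) = max{1, L(T_i)}. -/

import Mathlib

open Filter

/-- The shift map on one-sided sequences. -/
def seqShift {X : Type*} : (ℕ → X) → (ℕ → X) := fun x n => x (n + 1)

/-- The orbit space `X_T` of the `ℤ₊^k`-action generated by `T 0, …, T (k-1)`. -/
def orbitSpace {X : Type*} {k : ℕ} (T : Fin k → X → X) : Set (ℕ → X) :=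
  {x | ∀ n : ℕ, ∃ i : Fin k, x (n + 1) = T i (x n)}

/-- Friedland's entropy of the `ℤ₊^k`-action generated by `T`. -/
noncomputable def friedlandEntropy {X : Type*} [UniformSpace X] {k : ℕ}
    (T : Fin k → X → X) : EReal :=
  Dynamics.coverEntropy seqShift (orbitSpace T)

/-- `b(ε)`: the minimal number of `ε`-balls needed to cover `X`. -/
noncomputable def ballCoverNum (X : Type*) [MetricSpace X] (ε : ℝ) : ℕ :=
  sInf {m : ℕ | ∃ s : Finset X, s.card = m ∧ (⋃ x ∈ s, Metric.ball x ε) = Set.univ}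

/-- The ball dimension `D(X) = limsup_{ε→0⁺} log b(ε) / |log ε| ∈ ℝ ∪ {∞}`. -/
noncomputable def ballDim (X : Type*) [MetricSpace X] : EReal :=
  limsup (fun ε : ℝ => ((Real.log (ballCoverNum X ε) / |Real.log ε| : ℝ) : EReal))
    (nhdsWithin 0 (Set.Ioi 0))

/-!
Orbits of length `N` that follow the same word `w` in the generators stay `ε`-close as soon as their
starting points are `ε / L_w`-close, where `L_w` is the product of the constants `max 1 (L i)` along
`w`. Hence `∑_w b(ε / L_w)` dynamical balls cover the orbit space. For `D > D(X)` and small `ε`,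
`b(ε / L_w) ≤ (L_w / ε) ^ D` uniformly in `w`, because `L_w ≥ 1`; the sum over words then factorises
into `ε ^ (-D) * (∑ i, max 1 (L i) ^ D) ^ N`, whose exponential growth rate is
`log ∑ i, max 1 (L i) ^ D`. Letting `D` decrease to `D(X)` gives the bound.
-/

section

open Dynamics Finset ExpGrowth
open scoped NNReal ENNReal Topology Uniformity

theorem exists_finset_dist_lt_of_mem_uniformity_pi {ι : Type*} {Y : ι → Type*}
    [∀ i, PseudoMetricSpace (Y i)] {U : SetRel (∀ i, Y i) (∀ i, Y i)} (hU : U ∈ 𝓤 (∀ i, Y i)) :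
    ∃ I : Finset ι, ∃ ε > 0, ∀ x y : ∀ i, Y i, (∀ i ∈ I, dist (x i) (y i) < ε) → (x, y) ∈ U := by
  have hbasis := HasBasis.iInf' fun i : ι =>
    (Metric.uniformity_basis_dist (α := Y i)).comap
      fun p : (∀ i, Y i) × (∀ i, Y i) => (p.1 i, p.2 i)
  rw [← Pi.uniformity] at hbasis
  obtain ⟨⟨I, δ⟩, ⟨hI, hδ⟩, hsub⟩ := hbasis.mem_iff.1 hU
  have hsmall : ∀ᶠ ε in 𝓝[>] (0 : ℝ), ∀ i ∈ I, ε ≤ δ i :=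
    (eventually_all_finite hI).2 fun i hi =>
      mem_of_superset (Ioc_mem_nhdsGT (hδ i hi)) fun _ => And.right
  obtain ⟨ε, hεδ, hε⟩ := (hsmall.and self_mem_nhdsWithin).exists
  refine ⟨hI.toFinset, ε, hε, fun x y hxy => hsub (Set.mem_iInter₂.2 fun i hi => ?_)⟩
  exact (hxy i (hI.mem_toFinset.2 hi)).trans_le (hεδ i hi)

section BallCover

variable {X : Type*} [MetricSpace X]

theorem exists_finset_card_eq_ballCoverNum (hX : TotallyBounded (Set.univ : Set X)) {ε : ℝ}
    (hε : 0 < ε) :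
    ∃ s : Finset X, s.card = ballCoverNum X ε ∧ ⋃ x ∈ s, Metric.ball x ε = Set.univ := by
  obtain ⟨t, -, ht, hcover⟩ := Metric.finite_approx_of_totallyBounded hX ε hε
  refine Nat.sInf_mem (s := {m | ∃ s : Finset X, s.card = m ∧ _}) ⟨_, ht.toFinset, rfl, ?_⟩
  simpa [Set.univ_subset_iff] using hcover

theorem eventually_ballCoverNum_le_rpow_neg {D : ℝ} (hD : ballDim X < D) :
    ∀ᶠ ε in 𝓝[>] (0 : ℝ), (ballCoverNum X ε : ℝ) ≤ ε ^ (-D) := by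
  filter_upwards [eventually_lt_of_limsup_lt hD, Ioo_mem_nhdsGT (zero_lt_one' ℝ)]
    with ε hlt ⟨hε₀, hε₁⟩
  have hlog : Real.log ε < 0 := Real.log_neg hε₀ hε₁
  rw [EReal.coe_lt_coe_iff, abs_of_neg hlog, div_lt_iff₀ (neg_pos.2 hlog)] at hlt
  rcases (ballCoverNum X ε).eq_zero_or_pos with hb | hb
  · rw [hb, Nat.cast_zero]
    positivity
  · rw [Real.le_rpow_iff_log_le (Nat.cast_pos.2 hb) hε₀]
    linarith

end BallCover

theorem sum_div_prod_le_rpow_neg_mul_pow {ι : Type*} [Fintype ι] {a : ι → ℝ} (ha : ∀ i, 1 ≤ a i)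
    {b : ℝ → ℝ} {D ε : ℝ} (hε : 0 < ε) (hb : ∀ δ ∈ Set.Ioc 0 ε, b δ ≤ δ ^ (-D)) (N : ℕ) :
    ∑ w : Fin N → ι, b (ε / ∏ j, a (w j)) ≤ ε ^ (-D) * (∑ i, a i ^ D) ^ N := by
  have ha₀ : ∀ i, 0 ≤ a i := fun i => zero_le_one.trans (ha i)
  have hterm : ∀ w : Fin N → ι, b (ε / ∏ j, a (w j)) ≤ ε ^ (-D) * ∏ j, a (w j) ^ D := by
    intro w
    have hw : 1 ≤ ∏ j, a (w j) := Finset.one_le_prod fun j _ => ha (w j)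
    have hw₀ : 0 < ∏ j, a (w j) := one_pos.trans_le hw
    calc b (ε / ∏ j, a (w j))
        ≤ (ε / ∏ j, a (w j)) ^ (-D) := hb _ ⟨div_pos hε hw₀, div_le_self hε.le hw⟩
      _ = ε ^ (-D) * (∏ j, a (w j)) ^ D := by
          rw [Real.div_rpow hε.le hw₀.le, Real.rpow_neg hw₀.le, div_inv_eq_mul]
      _ = ε ^ (-D) * ∏ j, a (w j) ^ D := by
          rw [Real.finsetProd_rpow _ _ fun j _ => ha₀ (w j)]
  calc ∑ w : Fin N → ι, b (ε / ∏ j, a (w j))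
      ≤ ∑ w : Fin N → ι, ε ^ (-D) * ∏ j, a (w j) ^ D := sum_le_sum fun w _ => hterm w
    _ = ε ^ (-D) * (∑ i, a i ^ D) ^ N := by
        rw [← mul_sum, sum_pow', Fintype.piFinset_univ]

theorem continuous_log_sum_rpow {ι : Type*} [Fintype ι] [Nonempty ι] {a : ι → ℝ}
    (ha : ∀ i, 0 < a i) : Continuous fun D : ℝ => Real.log (∑ i, a i ^ D) := by
  refine Continuous.log ?_ fun D =>
    (sum_pos (fun i _ => Real.rpow_pos_of_pos (ha i) D) univ_nonempty).ne'
  exact continuous_finsetSum _ fun i _ => Real.continuous_const_rpow (ha i).ne'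

/-- The orbit of `x` under the maps `T i`, where the map applied at time `n` is `T (v n)`.
Itineraries are infinite; a finite word is extended arbitrarily. -/
def itineraryOrbit {X ι : Type*} (T : ι → X → X) (v : ℕ → ι) (x : X) : ℕ → X
  | 0 => x
  | n + 1 => T (v n) (itineraryOrbit T v x n)

section Itinerary

variable {X ι : Type*} {T : ι → X → X}

theorem eq_itineraryOrbit {v : ℕ → ι} {y : ℕ → X} (hy : ∀ n, y (n + 1) = T (v n) (y n)) :
    y = itineraryOrbit T v (y 0) := by
  funext n
  induction n with
  | zero => rfl
  | succ n ih => rw [hy, ih]; rfl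

theorem itineraryOrbit_congr {v v' : ℕ → ι} {n : ℕ} (h : ∀ m < n, v m = v' m) (x : X) :
    itineraryOrbit T v x n = itineraryOrbit T v' x n := by
  induction n with
  | zero => rfl
  | succ n ih =>
    rw [itineraryOrbit, itineraryOrbit, h n n.lt_succ_self,
      ih fun m hm => h m (hm.trans n.lt_succ_self)]

theorem lipschitzWith_itineraryOrbit [PseudoEMetricSpace X] {K : ι → ℝ≥0}
    (hT : ∀ i, LipschitzWith (K i) (T i)) (v : ℕ → ι) (n : ℕ) :
    LipschitzWith (∏ m ∈ range n, K (v m)) fun x => itineraryOrbit T v x n := by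
  induction n with
  | zero => exact LipschitzWith.id
  | succ n ih =>
    rw [prod_range_succ, mul_comm]
    exact (hT (v n)).comp ih

theorem dist_itineraryOrbit_lt [PseudoMetricSpace X] {K : ι → ℝ≥0} (hK : ∀ i, 1 ≤ K i)
    (hT : ∀ i, LipschitzWith (K i) (T i)) {v : ℕ → ι} {N : ℕ} {ε : ℝ} {x y : X}
    (hxy : dist x y < ε / ∏ j : Fin N, (K (v j) : ℝ)) {n : ℕ} (hn : n ≤ N) :
    dist (itineraryOrbit T v x n) (itineraryOrbit T v y n) < ε := by
  have hprod : ∏ m ∈ range n, K (v m) ≤ ∏ j : Fin N, K (v j) := by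
    rw [Fin.prod_univ_eq_prod_range (fun m => K (v m))]
    exact prod_le_prod_of_subset_of_one_le' (range_subset_range.2 hn) fun m _ _ => hK (v m)
  have hpos : 0 < ∏ j : Fin N, (K (v j) : ℝ) :=
    prod_pos fun j _ => zero_lt_one.trans_le (hK (v j))
  calc dist (itineraryOrbit T v x n) (itineraryOrbit T v y n)
      ≤ (∏ j : Fin N, K (v j) : ℝ≥0) * dist x y :=
        ((lipschitzWith_itineraryOrbit hT v n).weaken hprod).dist_le_mul x y
    _ = dist x y * ∏ j : Fin N, (K (v j) : ℝ) := by rw [NNReal.coe_prod, mul_comm]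
    _ < ε := (lt_div_iff₀ hpos).1 hxy

theorem exists_finset_dist_itineraryOrbit_lt [MetricSpace X] [Fintype ι] [Nonempty ι]
    (hX : TotallyBounded (Set.univ : Set X)) {K : ι → ℝ≥0} (hK : ∀ i, 1 ≤ K i)
    (hT : ∀ i, LipschitzWith (K i) (T i)) {ε : ℝ} (hε : 0 < ε) (N : ℕ) :
    ∃ S : Finset (ℕ → X),
      S.card ≤ ∑ w : Fin N → ι, ballCoverNum X (ε / ∏ j, (K (w j) : ℝ)) ∧
      ∀ v x, ∃ c ∈ S, ∀ n ≤ N, dist (itineraryOrbit T v x n) (c n) < ε := by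
  classical
  have hscale : ∀ w : Fin N → ι, 0 < ε / ∏ j, (K (w j) : ℝ) := fun w =>
    div_pos hε (prod_pos fun j _ => zero_lt_one.trans_le (hK (w j)))
  choose s hcard hcover using fun w => exists_finset_card_eq_ballCoverNum hX (hscale w)
  let extendWord (w : Fin N → ι) : ℕ → ι :=
    Function.extend Fin.val w fun _ => Classical.arbitrary ι
  have hextendWord (w : Fin N → ι) (j : Fin N) : extendWord w j = w j :=
    Fin.val_injective.extend_apply w _ j
  refine ⟨univ.biUnion fun w => (s w).image (itineraryOrbit T (extendWord w)), ?_, fun v x => ?_⟩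
  · exact card_biUnion_le.trans (sum_le_sum fun w _ => card_image_le.trans_eq (hcard w))
  · let w : Fin N → ι := fun j => v j
    obtain ⟨c, hc, hxc⟩ := Set.mem_iUnion₂.1 ((hcover w).ge (Set.mem_univ x))
    refine ⟨itineraryOrbit T (extendWord w) c,
      mem_biUnion.2 ⟨w, mem_univ w, mem_image_of_mem _ hc⟩, fun n hn => ?_⟩
    rw [itineraryOrbit_congr fun m hm => (hextendWord w ⟨m, hm.trans_le hn⟩).symm]
    refine dist_itineraryOrbit_lt hK hT ?_ hn
    simpa only [hextendWord] using Metric.mem_ball.1 hxc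

end Itinerary

theorem seqShift_iterate_apply {X : Type*} (x : ℕ → X) (n j : ℕ) :
    (seqShift^[n] x) j = x (j + n) := by
  induction n generalizing x with
  | zero => rfl
  | succ n ih => rw [Function.iterate_succ_apply, ih]; rfl

theorem mem_dynEntourage_seqShift {X : Type*} [PseudoMetricSpace X] {U : SetRel (ℕ → X) (ℕ → X)}
    {m : ℕ} {ε : ℝ} (hU : ∀ x y : ℕ → X, (∀ j < m, dist (x j) (y j) < ε) → (x, y) ∈ U) {n : ℕ}
    {x y : ℕ → X} (hxy : ∀ j < m + n, dist (x j) (y j) < ε) :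
    (x, y) ∈ dynEntourage seqShift U n := by
  refine mem_dynEntourage.2 fun i hi => hU _ _ fun j hj => ?_
  rw [seqShift_iterate_apply, seqShift_iterate_apply]
  exact hxy (j + i) (by omega)

theorem friedlandEntropy_eq_bot_of_isEmpty {X : Type*} [UniformSpace X] {k : ℕ}
    [IsEmpty (Fin k)] {T : Fin k → X → X} : friedlandEntropy T = ⊥ := by
  have hempty : orbitSpace T = ∅ :=
    Set.eq_empty_of_forall_notMem fun x hx => isEmptyElim (hx 0).choose
  rw [friedlandEntropy, hempty, coverEntropy_empty]

section Friedland

variable {X : Type*} [MetricSpace X] {k : ℕ} {T : Fin k → X → X}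

theorem coverMincard_orbitSpace_le [NeZero k] (hX : TotallyBounded (Set.univ : Set X))
    {K : Fin k → ℝ≥0} (hK : ∀ i, 1 ≤ K i) (hT : ∀ i, LipschitzWith (K i) (T i))
    {U : SetRel (ℕ → X) (ℕ → X)} {m : ℕ} {ε : ℝ} (hε : 0 < ε)
    (hU : ∀ x y : ℕ → X, (∀ j < m, dist (x j) (y j) < ε) → (x, y) ∈ U) (n : ℕ) :
    coverMincard seqShift (orbitSpace T) U n ≤
      (∑ w : Fin (m + n) → Fin k, ballCoverNum X (ε / ∏ j, (K (w j) : ℝ)) : ℕ) := by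
  obtain ⟨S, hcard, hS⟩ := exists_finset_dist_itineraryOrbit_lt hX hK hT hε (m + n)
  have hcover : IsDynCoverOf seqShift (orbitSpace T) U n S := by
    intro y hy
    choose v hv using hy
    obtain ⟨c, hc, hyc⟩ := hS v (y 0)
    rw [← eq_itineraryOrbit hv] at hyc
    exact ⟨c, hc, mem_dynEntourage_seqShift hU fun j hj => hyc j hj.le⟩
  exact hcover.coverMincard_le_card.trans (Nat.cast_le.2 hcard)

theorem coverEntropyEntourage_orbitSpace_le [NeZero k] (hX : TotallyBounded (Set.univ : Set X))
    {K : Fin k → ℝ≥0} (hK : ∀ i, 1 ≤ K i) (hT : ∀ i, LipschitzWith (K i) (T i))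
    {U : SetRel (ℕ → X) (ℕ → X)} {m : ℕ} {ε D : ℝ} (hε : 0 < ε)
    (hU : ∀ x y : ℕ → X, (∀ j < m, dist (x j) (y j) < ε) → (x, y) ∈ U)
    (hb : ∀ δ ∈ Set.Ioc 0 ε, (ballCoverNum X δ : ℝ) ≤ δ ^ (-D)) :
    coverEntropyEntourage seqShift (orbitSpace T) U ≤ (Real.log (∑ i, (K i : ℝ) ^ D) : ℝ) := by
  set S : ℝ := ∑ i, (K i : ℝ) ^ D
  have hS : 0 < S := sum_pos
    (fun i _ => Real.rpow_pos_of_pos (zero_lt_one.trans_le (hK i)) D) univ_nonempty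
  have hcount (n : ℕ) : (coverMincard seqShift (orbitSpace T) U n : ℝ≥0∞) ≤
      ENNReal.ofReal (ε ^ (-D) * S ^ m) * ENNReal.ofReal S ^ n := by
    calc (coverMincard seqShift (orbitSpace T) U n : ℝ≥0∞)
        ≤ ENNReal.ofReal (∑ w : Fin (m + n) → Fin k,
            (ballCoverNum X (ε / ∏ j, (K (w j) : ℝ)) : ℝ)) := by
          rw [← Nat.cast_sum, ENNReal.ofReal_natCast]
          exact ENat.toENNReal_mono (coverMincard_orbitSpace_le hX hK hT hε hU n)
      _ ≤ ENNReal.ofReal (ε ^ (-D) * S ^ (m + n)) :=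
          ENNReal.ofReal_le_ofReal <| sum_div_prod_le_rpow_neg_mul_pow
            (b := fun δ => (ballCoverNum X δ : ℝ)) hK hε hb (m + n)
      _ = ENNReal.ofReal (ε ^ (-D) * S ^ m) * ENNReal.ofReal S ^ n := by
          rw [pow_add, ← mul_assoc, ENNReal.ofReal_mul (by positivity), ENNReal.ofReal_pow hS.le]
  calc coverEntropyEntourage seqShift (orbitSpace T) U
      ≤ expGrowthSup fun n => ENNReal.ofReal S ^ n :=
        expGrowthSup_le_of_eventually_le ENNReal.ofReal_ne_top (Eventually.of_forall hcount)
    _ = (Real.log S : ℝ) := by rw [expGrowthSup_pow, ENNReal.log_ofReal_of_pos hS]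

theorem friedlandEntropy_le_of_ballDim_lt [NeZero k] (hX : TotallyBounded (Set.univ : Set X))
    {K : Fin k → ℝ≥0} (hK : ∀ i, 1 ≤ K i) (hT : ∀ i, LipschitzWith (K i) (T i)) {D : ℝ}
    (hD : ballDim X < D) : friedlandEntropy T ≤ (Real.log (∑ i, (K i : ℝ) ^ D) : ℝ) := by
  refine iSup₂_le fun U hU => ?_
  obtain ⟨I, ε₁, hε₁, hIU⟩ := exists_finset_dist_lt_of_mem_uniformity_pi hU
  obtain ⟨m, hIm⟩ := I.exists_nat_subset_range
  obtain ⟨ε₂, hε₂, hb⟩ :=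
    mem_nhdsGT_iff_exists_Ioc_subset.1 (eventually_ballCoverNum_le_rpow_neg hD)
  refine coverEntropyEntourage_orbitSpace_le (m := m) (ε := min ε₁ ε₂) hX hK hT
    (lt_min hε₁ hε₂) (fun x y hxy => hIU x y fun i hi => ?_)
    fun δ hδ => hb ⟨hδ.1, hδ.2.trans (min_le_right _ _)⟩
  exact (hxy i (mem_range.1 (hIm hi))).trans_le (min_le_left _ _)

end Friedland

end

theorem friedlandEntropy_le_of_lipschitz_general {X : Type*} [MetricSpace X] {k : ℕ}
    (T : Fin k → X → X) (L : Fin k → NNReal) (hL : ∀ i, LipschitzWith (L i) (T i))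
    (hX : TotallyBounded (Set.univ : Set X)) (hD : ballDim X ≠ ⊤) :
    friedlandEntropy T ≤
      ((Real.log (∑ i : Fin k, (max 1 (L i : ℝ)) ^ (ballDim X).toReal) : ℝ) : EReal) := by
  rcases k.eq_zero_or_pos with rfl | hk
  · exact friedlandEntropy_eq_bot_of_isEmpty.trans_le bot_le
  have : NeZero k := ⟨hk.ne'⟩
  have hcont : Continuous fun D : ℝ =>
      ((Real.log (∑ i : Fin k, (max 1 (L i : ℝ)) ^ D) : ℝ) : EReal) :=
    continuous_coe_real_ereal.comp (continuous_log_sum_rpow fun i => by positivity)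
  refine ge_of_tendsto (hcont.continuousWithinAt (s := Set.Ioi (ballDim X).toReal)) ?_
  filter_upwards [self_mem_nhdsWithin] with D hDD
  have hlt : ballDim X < D := (EReal.le_coe_toReal hD).trans_lt (EReal.coe_lt_coe_iff.2 hDD)
  simpa only [NNReal.coe_max, NNReal.coe_one] using
    friedlandEntropy_le_of_ballDim_lt hX (K := fun i => max 1 (L i)) (fun i => le_max_left _ _)
      (fun i => (hL i).weaken (le_max_right _ _)) hlt

/-- if `X` has finite ball dimension `D(X)` and each generator `T i` is
Lipschitz with Lipschitz constant `L i`, then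
`h(T) ≤ log ∑ᵢ (max 1 (L i))^{D(X)}`. -/
theorem friedlandEntropy_le_of_lipschitz {X : Type*} [MetricSpace X] [CompactSpace X] {k : ℕ}
    (T : Fin k → X → X) (L : Fin k → NNReal) (hL : ∀ i, LipschitzWith (L i) (T i))
    (hD : ballDim X ≠ ⊤) :
    friedlandEntropy T ≤
      ((Real.log (∑ i : Fin k, (max 1 (L i : ℝ)) ^ (ballDim X).toReal) : ℝ) : EReal) :=
  friedlandEntropy_le_of_lipschitz_general T L hL isCompact_univ.totallyBounded hD
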